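/- Every strict tensor C*-category C with identity object ι defines an upper semicontinuous field of strict tensor C*-categories over the spectrum X of the abelian unital C*-algebra [ι,ι]: there is a family of fiber C*-functors x_* : C → C_x, x ∈ X, such that each norm function x ↦ ‖x_*(t)‖ is upper semicontinuous with supremum ‖t‖, and each fiber C_x inherits a strict tensor structure. -/

import Mathlib

/-!
STATEMENT 11: Every strict tensor C*-category `C` with identity object `ι` defines an
upper semicontinuous field of strict tensor C*-categories over the spectrum `X` of the
abelian unital C*-algebra `[ι,ι]`: there is a family of fiber C*-functors
`x_* : C → C_x`, `x ∈ X`, such that each norm function `x ↦ ‖x_*(t)‖` is upper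
semicontinuous with supremum `‖t‖`, and each fiber `C_x` inherits a strict tensor
structure.

The spectrum `X` is realized as the space of characters of `[ι,ι]` (with the topology
of pointwise convergence), the fiber of `(ρ,σ)` at a character `χ` as the quotient of
`(ρ,σ)` by the closed subspace generated by `{ f × t : χ(f) = 0, f ∈ [ι,ι] }`, and the
fiber functor `x_*` as the quotient map; `‖x_*(t)‖` is the quotient seminorm. That the
fibers are strict tensor C*-categories and the `x_*` (strict tensor) C*-functors is
expressed by compatibility of the quotient seminorms with all the operations of `C`.
-/

universe u v u' v'

/-- A C*-category structure on a family of Banach spaces `Hom ρ σ` indexed by objects: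
bilinear norm-decreasing composition, identities, and an isometric involutive
contravariant `*` satisfying the C*-identity. -/
structure CStarCategoryStruct {Obj : Type u} (Hom : Obj → Obj → Type v)
    [∀ ρ σ, NormedAddCommGroup (Hom ρ σ)] [∀ ρ σ, NormedSpace ℂ (Hom ρ σ)] :
    Type max u v where
  comp : ∀ {ρ σ τ : Obj}, Hom σ τ → Hom ρ σ → Hom ρ τ
  id : ∀ ρ : Obj, Hom ρ ρ
  star : ∀ {ρ σ : Obj}, Hom ρ σ → Hom σ ρ
  comp_assoc : ∀ {ρ σ τ υ : Obj} (t : Hom τ υ) (u : Hom σ τ) (v : Hom ρ σ),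
    comp (comp t u) v = comp t (comp u v)
  id_comp : ∀ {ρ σ : Obj} (t : Hom ρ σ), comp (id σ) t = t
  comp_id : ∀ {ρ σ : Obj} (t : Hom ρ σ), comp t (id ρ) = t
  add_comp : ∀ {ρ σ τ : Obj} (t t' : Hom σ τ) (u : Hom ρ σ),
    comp (t + t') u = comp t u + comp t' u
  comp_add : ∀ {ρ σ τ : Obj} (t : Hom σ τ) (u u' : Hom ρ σ),
    comp t (u + u') = comp t u + comp t u'
  smul_comp : ∀ {ρ σ τ : Obj} (c : ℂ) (t : Hom σ τ) (u : Hom ρ σ),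
    comp (c • t) u = c • comp t u
  comp_smul : ∀ {ρ σ τ : Obj} (c : ℂ) (t : Hom σ τ) (u : Hom ρ σ),
    comp t (c • u) = c • comp t u
  norm_comp_le : ∀ {ρ σ τ : Obj} (t : Hom σ τ) (u : Hom ρ σ), ‖comp t u‖ ≤ ‖t‖ * ‖u‖
  star_star : ∀ {ρ σ : Obj} (t : Hom ρ σ), star (star t) = t
  star_add : ∀ {ρ σ : Obj} (t t' : Hom ρ σ), star (t + t') = star t + star t'
  star_smul : ∀ {ρ σ : Obj} (c : ℂ) (t : Hom ρ σ),
    star (c • t) = (starRingEnd ℂ) c • star t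
  star_comp : ∀ {ρ σ τ : Obj} (t : Hom σ τ) (u : Hom ρ σ),
    star (comp t u) = comp (star u) (star t)
  star_id : ∀ ρ : Obj, star (id ρ) = id ρ
  norm_star : ∀ {ρ σ : Obj} (t : Hom ρ σ), ‖star t‖ = ‖t‖
  cstar_identity : ∀ {ρ σ : Obj} (t : Hom ρ σ), ‖comp (star t) t‖ = ‖t‖ ^ 2

variable {Obj : Type u} [Monoid Obj] {Hom : Obj → Obj → Type v}
  [∀ ρ σ, NormedAddCommGroup (Hom ρ σ)] [∀ ρ σ, NormedSpace ℂ (Hom ρ σ)]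

/-- A strict tensor structure on a C*-category: an associative bilinear C*-bifunctor
`×` with unit the identity object `1` and commuting with `*`. -/
structure StrictTensorStruct (C : CStarCategoryStruct Hom) : Type max u v where
  tens : ∀ {ρ σ ρ' σ' : Obj}, Hom ρ σ → Hom ρ' σ' → Hom (ρ * ρ') (σ * σ')
  tens_id : ∀ ρ ρ' : Obj, tens (C.id ρ) (C.id ρ') = C.id (ρ * ρ')
  tens_comp : ∀ {ρ σ τ ρ' σ' τ' : Obj} (t : Hom σ τ) (u : Hom ρ σ)
    (t' : Hom σ' τ') (u' : Hom ρ' σ'),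
    tens (C.comp t u) (C.comp t' u') = C.comp (tens t t') (tens u u')
  tens_add_left : ∀ {ρ σ ρ' σ' : Obj} (t t' : Hom ρ σ) (u : Hom ρ' σ'),
    tens (t + t') u = tens t u + tens t' u
  tens_add_right : ∀ {ρ σ ρ' σ' : Obj} (t : Hom ρ σ) (u u' : Hom ρ' σ'),
    tens t (u + u') = tens t u + tens t u'
  tens_smul_left : ∀ {ρ σ ρ' σ' : Obj} (c : ℂ) (t : Hom ρ σ) (u : Hom ρ' σ'),
    tens (c • t) u = c • tens t u
  tens_smul_right : ∀ {ρ σ ρ' σ' : Obj} (c : ℂ) (t : Hom ρ σ) (u : Hom ρ' σ'),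
    tens t (c • u) = c • tens t u
  tens_star : ∀ {ρ σ ρ' σ' : Obj} (t : Hom ρ σ) (u : Hom ρ' σ'),
    C.star (tens t u) = tens (C.star t) (C.star u)
  tens_assoc : ∀ {ρ σ ρ' σ' ρ'' σ'' : Obj} (t : Hom ρ σ) (u : Hom ρ' σ')
    (v : Hom ρ'' σ''), HEq (tens (tens t u) v) (tens t (tens u v))
  one_tens : ∀ {ρ σ : Obj} (t : Hom ρ σ), HEq (tens (C.id 1) t) t
  tens_one : ∀ {ρ σ : Obj} (t : Hom ρ σ), HEq (tens t (C.id 1)) t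
  norm_tens_le : ∀ {ρ σ ρ' σ' : Obj} (t : Hom ρ σ) (u : Hom ρ' σ'),
    ‖tens t u‖ ≤ ‖t‖ * ‖u‖

/-- The left action `f^l_{ρ,σ}(t) = f × t` of `(ι,ι)` on `(ρ,σ)`. -/
def StrictTensorStruct.lact {C : CStarCategoryStruct Hom} (T : StrictTensorStruct C)
    {ρ σ : Obj} (f : Hom 1 1) (t : Hom ρ σ) : Hom ρ σ :=
  cast (by rw [one_mul, one_mul]) (T.tens f t)

/-- The right action `f^r_{ρ,σ}(t) = t × f` of `(ι,ι)` on `(ρ,σ)`. -/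
def StrictTensorStruct.ract {C : CStarCategoryStruct Hom} (T : StrictTensorStruct C)
    {ρ σ : Obj} (f : Hom 1 1) (t : Hom ρ σ) : Hom ρ σ :=
  cast (by rw [mul_one, mul_one]) (T.tens t f)

/-- `[ι,ι] := { f ∈ (ι,ι) : 1_ρ × f = f × 1_ρ for every object ρ }`. -/
def StrictTensorStruct.centralScalars {C : CStarCategoryStruct Hom}
    (T : StrictTensorStruct C) : Set (Hom 1 1) :=
  {f : Hom 1 1 | ∀ ρ : Obj, HEq (T.tens (C.id ρ) f) (T.tens f (C.id ρ))}


/-- A character of the abelian unital C*-algebra `[ι,ι]`: a point of its spectrum. -/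
def IsCharacter (C : CStarCategoryStruct Hom) (T : StrictTensorStruct C)
    (χ : Hom 1 1 → ℂ) : Prop :=
  Continuous χ ∧ (∀ f g : Hom 1 1, χ (f + g) = χ f + χ g) ∧
    (∀ (c : ℂ) (f : Hom 1 1), χ (c • f) = c * χ f) ∧
    (∀ f ∈ T.centralScalars, ∀ g ∈ T.centralScalars, χ (C.comp f g) = χ f * χ g) ∧
    χ (C.id 1) = 1 ∧
    (∀ f ∈ T.centralScalars, χ (C.star f) = (starRingEnd ℂ) (χ f))

/-- The kernel of the fiber functor at a character `χ` of `[ι,ι]` on the arrow space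
`(ρ,σ)`: the closed subspace generated by `{ f × t : f ∈ [ι,ι], χ(f) = 0 }`. -/
def tensFiberNull {C : CStarCategoryStruct Hom} (T : StrictTensorStruct C)
    (χ : Hom 1 1 → ℂ) (ρ σ : Obj) : Submodule ℂ (Hom ρ σ) :=
  (Submodule.span ℂ
    {s : Hom ρ σ | ∃ f ∈ T.centralScalars, ∃ t : Hom ρ σ,
      χ f = 0 ∧ s = T.lact f t}).topologicalClosure

/-- The fiber seminorm `‖x_*(t)‖` at a character `χ`: the quotient seminorm of
`(ρ,σ)/tensFiberNull`. -/
noncomputable def tensFiberSeminorm {C : CStarCategoryStruct Hom}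
    (T : StrictTensorStruct C) (χ : Hom 1 1 → ℂ) {ρ σ : Obj} (t : Hom ρ σ) : ℝ :=
  sInf {r : ℝ | ∃ s ∈ tensFiberNull T χ ρ σ, r = ‖t - s‖}


set_option linter.unusedSectionVars false

lemma exists_small_bump {A : Type*} [CommCStarAlgebra A] (φ : A →⋆ₐ[ℂ] ℂ) (f : A)
    (hf : φ f = 0) {ε : ℝ} (hε : 0 < ε) :
    ∃ e : A, φ e = 1 ∧ ‖e‖ ≤ 1 ∧ ‖e * f‖ ≤ ε := by
  set h : A := star f * f with hh
  have hsa : IsSelfAdjoint h := IsSelfAdjoint.star_mul_self f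
  have hδ : 0 < ε ^ 2 := by positivity
  set g : ℝ → ℝ := fun x => max 0 (1 - |x| / ε ^ 2) with hg
  have hgc : Continuous g := by
    rw [hg]; fun_prop
  have g0 : ∀ x, 0 ≤ g x := fun x => le_max_left _ _
  have g1 : ∀ x, g x ≤ 1 := fun x =>
    max_le zero_le_one (by have : 0 ≤ |x| / ε ^ 2 := by positivity
                           linarith)
  have gx : ∀ x, |x| * g x ≤ ε ^ 2 := by
    intro x
    by_cases hx : |x| ≤ ε ^ 2
    · exact (mul_le_of_le_one_right (abs_nonneg x) (g1 x)).trans hx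
    · have h1 : g x = 0 := by
        apply max_eq_left
        have : 1 ≤ |x| / ε ^ 2 := by
          rw [le_div_iff₀ hδ]; linarith
        linarith
      rw [h1, mul_zero]; exact hδ.le
  have hφc : Continuous φ := map_continuous φ
  have hφh : φ h = 0 := by rw [hh, map_mul, hf, mul_zero]
  refine ⟨cfc g h, ?_, ?_, ?_⟩
  · rw [StarAlgHom.map_cfc φ g h hgc.continuousOn hφc hsa (by rw [hφh]; exact IsSelfAdjoint.zero _),
      hφh]
    rw [cfc_apply_zero]
    simp [hg]
  · refine norm_cfc_le zero_le_one fun x _ => ?_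
    rw [Real.norm_eq_abs, abs_of_nonneg (g0 x)]
    exact g1 x
  · have hes : star (cfc g h) = cfc g h := (cfc_predicate g h : IsSelfAdjoint _)
    have h1 : star (cfc g h * f) * (cfc g h * f) = cfc (fun x => x * (g x * g x)) h := by
      rw [cfc_mul (fun x => x) (fun x => g x * g x) h (by fun_prop) (by fun_prop),
        cfc_mul g g h (by fun_prop) (by fun_prop), cfc_id' ℝ h, star_mul, hes, hh]
      ring
    have h2 : ‖cfc g h * f‖ * ‖cfc g h * f‖ ≤ ε ^ 2 := by
      rw [← CStarRing.norm_star_mul_self, h1]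
      refine norm_cfc_le hδ.le fun x _ => ?_
      rw [Real.norm_eq_abs, abs_mul, abs_of_nonneg (mul_nonneg (g0 x) (g0 x)), ← mul_assoc]
      exact (mul_le_of_le_one_right (mul_nonneg (abs_nonneg x) (g0 x)) (g1 x)).trans (gx x)
    exact abs_le_of_sq_le_sq' (by nlinarith) hε.le |>.2

lemma exists_norming_character {A B : Type*} [CommCStarAlgebra A] [CStarAlgebra B] [Nontrivial B]
    (i : A →⋆ₐ[ℂ] B) (a : B) (ha : IsSelfAdjoint a) (hc : ∀ f, i f * a = a * i f) :
    ∃ φ : A →⋆ₐ[ℂ] ℂ, ∀ e, φ e = 1 → ‖a‖ ≤ ‖i e * a‖ := by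
  set S : Set B := insert a (Set.range i) with hS
  have hcomm : ∀ x ∈ S, ∀ y ∈ S, x * y = y * x := by
    rintro x (rfl | ⟨f, rfl⟩) y (rfl | ⟨g, rfl⟩)
    · rfl
    · exact (hc g).symm
    · exact hc f
    · rw [← map_mul, ← map_mul, mul_comm]
  have hstar : ∀ x ∈ S, star x ∈ S := by
    rintro x (rfl | ⟨f, rfl⟩)
    · rw [ha.star_eq]; exact Set.mem_insert _ _
    · rw [← map_star]; exact Set.mem_insert_of_mem _ ⟨_, rfl⟩
  have := StarAlgebra.isMulCommutative_adjoin ℂ hcomm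
    (fun x hx y hy => hcomm x hx _ (hstar y hy))
  set D := (StarAlgebra.adjoin ℂ S).topologicalClosure with hD
  have hDc : IsClosed (D : Set B) := StarSubalgebra.isClosed_topologicalClosure _
  let cr : CommRing D := StarSubalgebra.commRingTopologicalClosure _ (fun x y => this.is_comm.comm x y)
  have : CompleteSpace D := hDc.completeSpace_coe
  let : CommCStarAlgebra D := { (inferInstance : NormedRing D), (inferInstance : StarRing D),
    (inferInstance : CStarRing D), (inferInstance : NormedAlgebra ℂ D),
    (inferInstance : StarModule ℂ D), (inferInstance : CompleteSpace D) with mul_comm := cr.mul_comm }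
  have hSD : S ⊆ D := (StarAlgebra.subset_adjoin ℂ S).trans
    (StarSubalgebra.le_topologicalClosure _)
  let a' : D := ⟨a, hSD (Set.mem_insert _ _)⟩
  have ha' : IsSelfAdjoint a' := Subtype.ext ha
  obtain ⟨z, hz, hzn⟩ := spectrum.exists_nnnorm_eq_spectralRadius a'
  rw [ha'.spectralRadius_eq_nnnorm] at hzn
  obtain ⟨ψ, hψ⟩ := WeakDual.CharacterSpace.mem_spectrum_iff_exists.1 hz
  let j : A →⋆ₐ[ℂ] D := i.codRestrict D (fun f => hSD (Set.mem_insert_of_mem _ ⟨f, rfl⟩))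
  let ψ' : D →⋆ₐ[ℂ] ℂ :=
    { toFun := fun x => ψ x
      map_one' := map_one ψ
      map_mul' := fun x y => map_mul ψ x y
      map_zero' := map_zero ψ
      map_add' := fun x y => map_add ψ x y
      commutes' := fun c => AlgHomClass.commutes ψ c
      map_star' := fun x => map_star ψ x }
  refine ⟨ψ'.comp j, fun e he => ?_⟩
  have he' : ψ (j e) = 1 := he
  have h1 : ‖a‖ = ‖ψ (j e * a')‖ := by
    rw [map_mul, he', one_mul, hψ]
    have : ‖z‖₊ = ‖a'‖₊ := by exact_mod_cast hzn
    exact (congrArg NNReal.toReal this).symm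
  rw [h1]
  have h2 : ‖ψ (j e * a')‖ ≤ ‖j e * a'‖ := AlgHom.norm_apply_le_self ψ _
  exact h2

section Helpers

variable {C : CStarCategoryStruct Hom} (T : StrictTensorStruct C)

lemma hom_type_eq {ρ σ ρ' σ' : Obj} (h : ρ = ρ') (h' : σ = σ') : Hom ρ σ = Hom ρ' σ' := by
  rw [h, h']

lemma cast_hom_add {ρ σ ρ' σ' : Obj} (h : ρ = ρ') (h' : σ = σ') (H : Hom ρ σ = Hom ρ' σ')
    (t u : Hom ρ σ) : cast H (t + u) = cast H t + cast H u := by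
  subst h h'; rfl

lemma cast_hom_smul {ρ σ ρ' σ' : Obj} (h : ρ = ρ') (h' : σ = σ') (H : Hom ρ σ = Hom ρ' σ')
    (c : ℂ) (t : Hom ρ σ) : cast H (c • t) = c • cast H t := by
  subst h h'; rfl

lemma cast_hom_norm {ρ σ ρ' σ' : Obj} (h : ρ = ρ') (h' : σ = σ') (H : Hom ρ σ = Hom ρ' σ')
    (t : Hom ρ σ) : ‖cast H t‖ = ‖t‖ := by
  subst h h'; rfl

lemma cast_hom_continuous {ρ σ ρ' σ' : Obj} (h : ρ = ρ') (h' : σ = σ')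
    (H : Hom ρ σ = Hom ρ' σ') : Continuous (cast H) := by
  subst h h'; exact continuous_id

lemma comp_heq {ρ σ τ ρ' σ' τ' : Obj} (h1 : ρ = ρ') (h2 : σ = σ') (h3 : τ = τ')
    {t : Hom σ τ} {t' : Hom σ' τ'} {u : Hom ρ σ} {u' : Hom ρ' σ'} (ht : HEq t t')
    (hu : HEq u u') : HEq (C.comp t u) (C.comp t' u') := by
  subst h1 h2 h3; cases ht; cases hu; rfl

lemma star_heq {ρ σ ρ' σ' : Obj} (h1 : ρ = ρ') (h2 : σ = σ')
    {t : Hom ρ σ} {t' : Hom ρ' σ'} (ht : HEq t t') : HEq (C.star t) (C.star t') := by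
  subst h1 h2; cases ht; rfl

lemma smul_heq {ρ σ ρ' σ' : Obj} (h1 : ρ = ρ') (h2 : σ = σ') (c : ℂ)
    {t : Hom ρ σ} {t' : Hom ρ' σ'} (ht : HEq t t') : HEq (c • t) (c • t') := by
  subst h1 h2; cases ht; rfl

lemma add_heq {ρ σ ρ' σ' : Obj} (h1 : ρ = ρ') (h2 : σ = σ')
    {t u : Hom ρ σ} {t' u' : Hom ρ' σ'} (ht : HEq t t') (hu : HEq u u') :
    HEq (t + u) (t' + u') := by
  subst h1 h2; cases ht; cases hu; rfl

lemma tens_heq {ρ σ ρ' σ' α β α' β' : Obj} (h1 : ρ = ρ') (h2 : σ = σ') (h3 : α = α')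
    (h4 : β = β') {t : Hom ρ σ} {t' : Hom ρ' σ'} {u : Hom α β} {u' : Hom α' β'}
    (ht : HEq t t') (hu : HEq u u') : HEq (T.tens t u) (T.tens t' u') := by
  subst h1 h2 h3 h4; cases ht; cases hu; rfl

lemma id_heq {ρ ρ' : Obj} (h : ρ = ρ') : HEq (C.id ρ) (C.id ρ') := by
  subst h; rfl

lemma lact_heq {ρ σ : Obj} (f : Hom 1 1) (t : Hom ρ σ) : HEq (T.lact f t) (T.tens f t) :=
  cast_heq _ _

lemma lact_add {ρ σ : Obj} (f : Hom 1 1) (t u : Hom ρ σ) :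
    T.lact f (t + u) = T.lact f t + T.lact f u := by
  unfold StrictTensorStruct.lact
  rw [T.tens_add_right, cast_hom_add (one_mul _) (one_mul _)]

lemma lact_smul {ρ σ : Obj} (f : Hom 1 1) (c : ℂ) (t : Hom ρ σ) :
    T.lact f (c • t) = c • T.lact f t := by
  unfold StrictTensorStruct.lact
  rw [T.tens_smul_right, cast_hom_smul (one_mul _) (one_mul _)]

lemma add_lact {ρ σ : Obj} (f g : Hom 1 1) (t : Hom ρ σ) :
    T.lact (f + g) t = T.lact f t + T.lact g t := by
  unfold StrictTensorStruct.lact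
  rw [T.tens_add_left, cast_hom_add (one_mul _) (one_mul _)]

lemma smul_lact {ρ σ : Obj} (c : ℂ) (f : Hom 1 1) (t : Hom ρ σ) :
    T.lact (c • f) t = c • T.lact f t := by
  unfold StrictTensorStruct.lact
  rw [T.tens_smul_left, cast_hom_smul (one_mul _) (one_mul _)]

lemma lact_norm {ρ σ : Obj} (f : Hom 1 1) (t : Hom ρ σ) : ‖T.lact f t‖ ≤ ‖f‖ * ‖t‖ := by
  unfold StrictTensorStruct.lact
  rw [cast_hom_norm (one_mul _) (one_mul _)]
  exact T.norm_tens_le f t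

lemma id_lact {ρ σ : Obj} (t : Hom ρ σ) : T.lact (C.id 1) t = t :=
  eq_of_heq ((lact_heq T _ _).trans (T.one_tens t))

lemma lact_comp_left {ρ σ τ : Obj} (f : Hom 1 1) (t : Hom σ τ) (u : Hom ρ σ) :
    T.lact f (C.comp t u) = C.comp (T.lact f t) u := by
  apply eq_of_heq
  refine (lact_heq T _ _).trans ?_
  have h : T.tens f (C.comp t u) = C.comp (T.tens f t) (T.tens (C.id 1) u) := by
    rw [← T.tens_comp, C.comp_id]
  rw [h]
  exact comp_heq (one_mul _) (one_mul _) (one_mul _) (lact_heq T _ _).symm (T.one_tens u)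

lemma lact_comp_right {ρ σ τ : Obj} (f : Hom 1 1) (t : Hom σ τ) (u : Hom ρ σ) :
    T.lact f (C.comp t u) = C.comp t (T.lact f u) := by
  apply eq_of_heq
  refine (lact_heq T _ _).trans ?_
  have h : T.tens f (C.comp t u) = C.comp (T.tens (C.id 1) t) (T.tens f u) := by
    rw [← T.tens_comp, C.id_comp]
  rw [h]
  exact comp_heq (one_mul _) (one_mul _) (one_mul _) (T.one_tens t) (lact_heq T _ _).symm

lemma comp_lact {ρ σ : Obj} (f g : Hom 1 1) (t : Hom ρ σ) :
    T.lact (C.comp f g) t = T.lact f (T.lact g t) := by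
  have h0 : T.lact f (T.lact g t) = C.comp (T.lact f (C.id σ)) (T.lact g t) := by
    rw [← lact_comp_left, C.id_comp]
  rw [h0]
  apply eq_of_heq
  refine (lact_heq T _ _).trans ?_
  have h : T.tens (C.comp f g) t = C.comp (T.tens f (C.id σ)) (T.tens g t) := by
    rw [← T.tens_comp, C.id_comp]
  rw [h]
  exact comp_heq (one_mul _) (one_mul _) (one_mul _) (lact_heq T _ _).symm (lact_heq T _ _).symm

lemma lact_star {ρ σ : Obj} (f : Hom 1 1) (t : Hom ρ σ) :
    C.star (T.lact f t) = T.lact (C.star f) (C.star t) := by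
  apply eq_of_heq
  refine HEq.trans ?_ (lact_heq T _ _).symm
  rw [← T.tens_star]
  exact star_heq (one_mul _).symm (one_mul _).symm (lact_heq T _ _)

lemma central_tens {f : Hom 1 1} (hf : f ∈ T.centralScalars) {ρ σ : Obj} (t : Hom ρ σ) :
    HEq (T.tens t f) (T.tens f t) := by
  have h1 : T.tens t f = C.comp (T.tens t (C.id 1)) (T.tens (C.id ρ) f) := by
    rw [← T.tens_comp, C.comp_id, C.id_comp]
  have h2 : T.tens f t = C.comp (T.tens (C.id 1) t) (T.tens f (C.id ρ)) := by
    rw [← T.tens_comp, C.comp_id, C.id_comp]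
  rw [h1, h2]
  exact comp_heq (by simp) (by simp) (by simp) ((T.tens_one t).trans (T.one_tens t).symm) (hf ρ)

lemma tens_lact_left {ρ σ ρ' σ' : Obj} (f : Hom 1 1) (t : Hom ρ σ) (u : Hom ρ' σ') :
    T.tens (T.lact f t) u = T.lact f (T.tens t u) := by
  apply eq_of_heq
  refine HEq.trans ?_ (lact_heq T _ _).symm
  refine HEq.trans ?_ (T.tens_assoc f t u)
  exact tens_heq T (one_mul _).symm (one_mul _).symm rfl rfl (lact_heq T _ _) HEq.rfl

lemma tens_lact_right {ρ σ ρ' σ' : Obj} {f : Hom 1 1} (hf : f ∈ T.centralScalars)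
    (t : Hom ρ σ) (u : Hom ρ' σ') :
    T.tens t (T.lact f u) = T.lact f (T.tens t u) := by
  rw [← tens_lact_left]
  apply eq_of_heq
  refine HEq.trans (tens_heq T rfl rfl (one_mul _).symm (one_mul _).symm HEq.rfl
    (lact_heq T f u)) ?_
  refine (T.tens_assoc t f u).symm.trans ?_
  exact tens_heq T (by simp) (by simp) rfl rfl
    ((central_tens T hf t).trans (lact_heq T _ _).symm) HEq.rfl

/-- On `(ι,ι)` the action is composition. -/
lemma lact_eq_comp (f g : Hom (1 : Obj) 1) : T.lact f g = C.comp f g := by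
  have h : T.lact f (C.id 1) = f :=
    eq_of_heq ((lact_heq T _ _).trans (T.tens_one f))
  calc T.lact f g = T.lact f (C.comp (C.id 1) g) := by rw [C.id_comp]
    _ = C.comp f g := by rw [lact_comp_left, h]

lemma scalar_comm (T : StrictTensorStruct C) (f g : Hom (1 : Obj) 1) : C.comp f g = C.comp g f := by
  have h : T.lact f (C.id 1) = f :=
    eq_of_heq ((lact_heq T _ _).trans (T.tens_one f))
  calc C.comp f g = T.lact f g := (lact_eq_comp T f g).symm
    _ = T.lact f (C.comp g (C.id 1)) := by rw [C.comp_id]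
    _ = C.comp g f := by rw [lact_comp_right, h]

/-- The endomorphism C*-algebra `(ρ,ρ)`. -/
def EndAlg (_C : CStarCategoryStruct Hom) (ρ : Obj) : Type v := Hom ρ ρ

lemma comp_zero_aux (C : CStarCategoryStruct Hom) {ρ σ τ : Obj} (t : Hom σ τ) :
    C.comp t (0 : Hom ρ σ) = 0 := by
  have := C.comp_smul (ρ := ρ) 0 t 0
  simpa using this

lemma zero_comp_aux (C : CStarCategoryStruct Hom) {ρ σ τ : Obj} (t : Hom ρ σ) :
    C.comp (0 : Hom σ τ) t = 0 := by
  have := C.smul_comp (τ := τ) 0 0 t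
  simpa using this

instance (C : CStarCategoryStruct Hom) (ρ : Obj) : NormedAddCommGroup (EndAlg C ρ) :=
  inferInstanceAs (NormedAddCommGroup (Hom ρ ρ))

instance (C : CStarCategoryStruct Hom) (ρ : Obj) : NormedSpace ℂ (EndAlg C ρ) :=
  inferInstanceAs (NormedSpace ℂ (Hom ρ ρ))

instance (C : CStarCategoryStruct Hom) (ρ : Obj) [CompleteSpace (Hom ρ ρ)] :
    CompleteSpace (EndAlg C ρ) :=
  inferInstanceAs (CompleteSpace (Hom ρ ρ))

instance (C : CStarCategoryStruct Hom) (ρ : Obj) : NormedRing (EndAlg C ρ) :=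
  { (inferInstance : NormedAddCommGroup (EndAlg C ρ)) with
    mul := fun a b => C.comp a b
    one := C.id ρ
    mul_assoc := fun a b c => C.comp_assoc a b c
    one_mul := fun a => C.id_comp a
    mul_one := fun a => C.comp_id a
    left_distrib := fun a b c => C.comp_add a b c
    right_distrib := fun a b c => C.add_comp a b c
    zero_mul := fun a => zero_comp_aux C a
    mul_zero := fun a => comp_zero_aux C a
    norm_mul_le := fun a b => C.norm_comp_le a b }

instance (C : CStarCategoryStruct Hom) (ρ : Obj) : Algebra ℂ (EndAlg C ρ) :=
  Algebra.ofModule (fun c a b => C.smul_comp c a b) (fun c a b => C.comp_smul c a b)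

instance (C : CStarCategoryStruct Hom) (ρ : Obj) : NormedAlgebra ℂ (EndAlg C ρ) where
  norm_smul_le c a := (norm_smul_le c a : _)

instance (C : CStarCategoryStruct Hom) (ρ : Obj) : StarRing (EndAlg C ρ) where
  star a := C.star a
  star_involutive a := C.star_star a
  star_mul a b := C.star_comp a b
  star_add a b := C.star_add a b

instance (C : CStarCategoryStruct Hom) (ρ : Obj) : CStarRing (EndAlg C ρ) where
  norm_mul_self_le a := by
    have := C.cstar_identity (ρ := ρ) (σ := ρ) a
    exact le_of_eq ((sq _).symm.trans this.symm)

instance (C : CStarCategoryStruct Hom) (ρ : Obj) : StarModule ℂ (EndAlg C ρ) where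
  star_smul c a := C.star_smul c a

noncomputable instance (C : CStarCategoryStruct Hom) (ρ : Obj) [CompleteSpace (Hom ρ ρ)] :
    CStarAlgebra (EndAlg C ρ) where

lemma central_comp {f g : Hom (1 : Obj) 1} (hf : f ∈ T.centralScalars)
    (hg : g ∈ T.centralScalars) : C.comp f g ∈ T.centralScalars := by
  intro ρ
  have h1 : T.tens (C.id ρ) (C.comp f g) = C.comp (T.tens (C.id ρ) f) (T.tens (C.id ρ) g) := by
    rw [← T.tens_comp, C.comp_id]
  have h2 : T.tens (C.comp f g) (C.id ρ) = C.comp (T.tens f (C.id ρ)) (T.tens g (C.id ρ)) := by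
    rw [← T.tens_comp, C.comp_id]
  rw [h1, h2]
  exact comp_heq (by simp) (by simp) (by simp) (hf ρ) (hg ρ)

lemma central_add {f g : Hom (1 : Obj) 1} (hf : f ∈ T.centralScalars)
    (hg : g ∈ T.centralScalars) : f + g ∈ T.centralScalars := by
  intro ρ
  rw [T.tens_add_left, T.tens_add_right]
  exact add_heq (by simp) (by simp) (hf ρ) (hg ρ)

lemma central_smul {f : Hom (1 : Obj) 1} (c : ℂ) (hf : f ∈ T.centralScalars) :
    c • f ∈ T.centralScalars := by
  intro ρ
  rw [T.tens_smul_left, T.tens_smul_right]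
  exact smul_heq (by simp) (by simp) c (hf ρ)

lemma central_id : C.id (1 : Obj) ∈ T.centralScalars := by
  intro ρ
  exact (T.tens_one _).trans (T.one_tens _).symm

lemma central_star {f : Hom (1 : Obj) 1} (hf : f ∈ T.centralScalars) :
    C.star f ∈ T.centralScalars := by
  intro ρ
  have h1 : T.tens (C.id ρ) (C.star f) = C.star (T.tens (C.id ρ) f) := by
    rw [T.tens_star, C.star_id]
  have h2 : T.tens (C.star f) (C.id ρ) = C.star (T.tens f (C.id ρ)) := by
    rw [T.tens_star, C.star_id]
  rw [h1, h2]
  exact star_heq (by simp) (by simp) (hf ρ)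

/-- `[ι,ι]` as a star subalgebra of `(ι,ι)`. -/
def centralAlg : StarSubalgebra ℂ (EndAlg C (1 : Obj)) where
  carrier := T.centralScalars
  mul_mem' hf hg := central_comp T hf hg
  add_mem' hf hg := central_add T hf hg
  algebraMap_mem' c := central_smul T c (central_id T)
  star_mem' hf := central_star T hf

lemma tens_right_continuous (ρ : Obj) :
    Continuous fun f : Hom (1 : Obj) 1 => T.tens (C.id ρ) f := by
  let L : Hom (1 : Obj) 1 →ₗ[ℂ] Hom (ρ * 1) (ρ * 1) :=
    { toFun := fun f => T.tens (C.id ρ) f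
      map_add' := fun f g => T.tens_add_right _ f g
      map_smul' := fun c f => T.tens_smul_right c _ f }
  exact (L.mkContinuous ‖C.id ρ‖ (fun f => T.norm_tens_le _ f)).continuous

lemma tens_left_continuous (ρ : Obj) :
    Continuous fun f : Hom (1 : Obj) 1 => T.tens f (C.id ρ) := by
  let L : Hom (1 : Obj) 1 →ₗ[ℂ] Hom (1 * ρ) (1 * ρ) :=
    { toFun := fun f => T.tens f (C.id ρ)
      map_add' := fun f g => T.tens_add_left f g _
      map_smul' := fun c f => T.tens_smul_left c f _ }
  exact (L.mkContinuous ‖C.id ρ‖ (fun f => (T.norm_tens_le f _).trans_eq (mul_comm _ _))).continuous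

lemma centralScalars_isClosed : IsClosed T.centralScalars := by
  have h : T.centralScalars = ⋂ ρ : Obj, {f : Hom (1 : Obj) 1 |
      cast (hom_type_eq (by simp) (by simp)) (T.tens (C.id ρ) f) = T.tens f (C.id ρ)} := by
    ext f
    simp only [StrictTensorStruct.centralScalars, Set.mem_ofPred_eq, Set.mem_iInter, cast_eq_iff_heq]
  rw [h]
  refine isClosed_iInter fun ρ => isClosed_eq ?_ (tens_left_continuous T ρ)
  exact (cast_hom_continuous (by simp) (by simp) _).comp (tens_right_continuous T ρ)

instance [CompleteSpace (Hom (1 : Obj) 1)] : CompleteSpace (centralAlg T) :=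
  (show IsClosed ((centralAlg T : Set (EndAlg C (1 : Obj)))) from
    centralScalars_isClosed T).completeSpace_coe

noncomputable instance [CompleteSpace (Hom (1 : Obj) 1)] : CommCStarAlgebra (centralAlg T) :=
  { (inferInstance : NormedRing (centralAlg T)), (inferInstance : StarRing (centralAlg T)),
    (inferInstance : CStarRing (centralAlg T)), (inferInstance : NormedAlgebra ℂ (centralAlg T)),
    (inferInstance : StarModule ℂ (centralAlg T)),
    (inferInstance : CompleteSpace (centralAlg T)) with
    mul_comm := fun f g => Subtype.ext (scalar_comm T f.1 g.1) }

/-- A character of `[ι,ι]` as a star homomorphism. -/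
def IsCharacter.toHom {χ : Hom (1 : Obj) 1 → ℂ} (h : IsCharacter C T χ) :
    centralAlg T →⋆ₐ[ℂ] ℂ where
  toFun f := χ f.1
  map_one' := h.2.2.2.2.1
  map_mul' f g := h.2.2.2.1 _ f.2 _ g.2
  map_zero' := by
    have := h.2.2.1 0 0
    rw [zero_smul, zero_mul] at this
    exact this
  map_add' f g := h.2.1 _ _
  commutes' c := by
    have h1 := h.2.2.1 c (C.id 1)
    rw [h.2.2.2.2.1, mul_one] at h1
    exact h1
  map_star' f := h.2.2.2.2.2 _ f.2

/-- The action of `[ι,ι]` on `(ρ,ρ)` as a star homomorphism. -/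
def centralHom (ρ : Obj) : centralAlg T →⋆ₐ[ℂ] EndAlg C ρ where
  toFun f := T.lact f.1 (C.id ρ)
  map_one' := id_lact T _
  map_mul' f g := by
    have h := comp_lact T f.1 g.1 (C.id ρ)
    have h2 := lact_comp_left T f.1 (C.id ρ) (T.lact g.1 (C.id ρ))
    rw [C.id_comp] at h2
    exact h.trans h2
  map_zero' := by
    have := smul_lact T 0 0 (C.id ρ)
    rw [zero_smul, zero_smul] at this
    exact this
  map_add' f g := add_lact T _ _ _
  commutes' c := by
    have := smul_lact T c (C.id 1) (C.id ρ)
    rw [id_lact] at this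
    exact this
  map_star' f := by
    have := lact_star T f.1 (C.id ρ)
    rw [C.star_id] at this
    exact this.symm

lemma lact_zero {ρ σ : Obj} (f : Hom (1 : Obj) 1) : T.lact f (0 : Hom ρ σ) = 0 := by
  have := lact_smul T f 0 (0 : Hom ρ σ)
  simpa using this

lemma lact_sub {ρ σ : Obj} (f : Hom (1 : Obj) 1) (t u : Hom ρ σ) :
    T.lact f (t - u) = T.lact f t - T.lact f u := by
  have := lact_add T f (t - u) u
  rw [sub_add_cancel] at this
  rw [this, add_sub_cancel_right]

/-- The functions of norm at most one equal to one at `χ`. -/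
def IsBump (χ : Hom (1 : Obj) 1 → ℂ) (e : Hom (1 : Obj) 1) : Prop :=
  e ∈ T.centralScalars ∧ χ e = 1 ∧ ‖e‖ ≤ 1

variable {T}

lemma IsBump.norm_lact_le {χ : Hom (1 : Obj) 1 → ℂ} {e : Hom (1 : Obj) 1} (he : IsBump T χ e)
    {ρ σ : Obj} (t : Hom ρ σ) : ‖T.lact e t‖ ≤ ‖t‖ :=
  (lact_norm T e t).trans (mul_le_of_le_one_left (norm_nonneg t) he.2.2)

lemma IsBump.comp {χ : Hom (1 : Obj) 1 → ℂ} (h : IsCharacter C T χ) {e e' : Hom (1 : Obj) 1}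
    (he : IsBump T χ e) (he' : IsBump T χ e') : IsBump T χ (C.comp e e') := by
  refine ⟨central_comp T he.1 he'.1, ?_, ?_⟩
  · rw [h.2.2.2.1 _ he.1 _ he'.1, he.2.1, he'.2.1, one_mul]
  · exact (C.norm_comp_le _ _).trans (mul_le_one₀ he.2.2 (norm_nonneg _) he'.2.2)

lemma IsBump.star {χ : Hom (1 : Obj) 1 → ℂ} (h : IsCharacter C T χ) {e : Hom (1 : Obj) 1}
    (he : IsBump T χ e) : IsBump T χ (C.star e) := by
  refine ⟨central_star T he.1, ?_, ?_⟩
  · rw [h.2.2.2.2.2 _ he.1, he.2.1, map_one]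
  · rw [C.norm_star]; exact he.2.2

lemma IsBump.exists_mul_le [CompleteSpace (Hom (1 : Obj) 1)] {χ : Hom (1 : Obj) 1 → ℂ}
    (h : IsCharacter C T χ) {f : Hom (1 : Obj) 1} (hf : f ∈ T.centralScalars) (hχ : χ f = 0)
    {ε : ℝ} (hε : 0 < ε) : ∃ e, IsBump T χ e ∧ ‖C.comp e f‖ ≤ ε := by
  obtain ⟨e, h1, h2, h3⟩ := exists_small_bump (h.toHom T) ⟨f, hf⟩ hχ hε
  exact ⟨e.1, ⟨e.2, h1, h2⟩, h3⟩

lemma exists_lact_le [CompleteSpace (Hom (1 : Obj) 1)] {χ : Hom (1 : Obj) 1 → ℂ}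
    (h : IsCharacter C T χ) {ρ σ : Obj} {s : Hom ρ σ} (hs : s ∈ tensFiberNull T χ ρ σ) :
    ∀ ε : ℝ, 0 < ε → ∃ e, IsBump T χ e ∧ ‖T.lact e s‖ ≤ ε := by
  have hid : ∃ e, IsBump T χ e := by
    obtain ⟨e, he, -⟩ := IsBump.exists_mul_le h (f := 0)
      (by simpa using central_smul T 0 (central_id T)) (map_zero (h.toHom T)) one_pos
    exact ⟨e, he⟩
  have hspan : ∀ s ∈ Submodule.span ℂ {s : Hom ρ σ | ∃ f ∈ T.centralScalars, ∃ t : Hom ρ σ,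
      χ f = 0 ∧ s = T.lact f t}, ∀ ε : ℝ, 0 < ε → ∃ e, IsBump T χ e ∧ ‖T.lact e s‖ ≤ ε := by
    intro s hs
    induction hs using Submodule.span_induction with
    | mem s hs =>
      obtain ⟨f, hf, t, hχ, rfl⟩ := hs
      intro ε hε
      obtain ⟨e, he, hle⟩ := IsBump.exists_mul_le h hf hχ
        (show 0 < ε / (‖t‖ + 1) by positivity)
      refine ⟨e, he, ?_⟩
      rw [← comp_lact]
      refine (lact_norm T _ _).trans ?_
      calc ‖C.comp e f‖ * ‖t‖ ≤ ε / (‖t‖ + 1) * (‖t‖ + 1) := by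
            gcongr; linarith
        _ = ε := by field_simp
    | zero =>
      intro ε hε
      obtain ⟨e, he⟩ := hid
      exact ⟨e, he, by rw [lact_zero, norm_zero]; exact hε.le⟩
    | add x y _ _ hx hy =>
      intro ε hε
      obtain ⟨e, he, hle⟩ := hx (ε / 2) (by positivity)
      obtain ⟨e', he', hle'⟩ := hy (ε / 2) (by positivity)
      refine ⟨C.comp e e', he.comp h he', ?_⟩
      rw [lact_add]
      refine (norm_add_le _ _).trans ?_
      have h1 : ‖T.lact (C.comp e e') x‖ ≤ ε / 2 := by
        rw [scalar_comm T, comp_lact]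
        exact (he'.norm_lact_le _).trans hle
      have h2 : ‖T.lact (C.comp e e') y‖ ≤ ε / 2 := by
        rw [comp_lact]
        exact (he.norm_lact_le _).trans hle'
      linarith
    | smul c x _ hx =>
      intro ε hε
      obtain ⟨e, he, hle⟩ := hx (ε / (‖c‖ + 1)) (by positivity)
      refine ⟨e, he, ?_⟩
      rw [lact_smul, norm_smul]
      calc ‖c‖ * ‖T.lact e x‖ ≤ (‖c‖ + 1) * (ε / (‖c‖ + 1)) := by
            gcongr; linarith
        _ = ε := by field_simp
  intro ε hε
  have hs' : s ∈ closure ((Submodule.span ℂ {s : Hom ρ σ | ∃ f ∈ T.centralScalars,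
      ∃ t : Hom ρ σ, χ f = 0 ∧ s = T.lact f t} : Submodule ℂ (Hom ρ σ)) : Set (Hom ρ σ)) := hs
  obtain ⟨s', hs', hd⟩ := Metric.mem_closure_iff.1 hs' (ε / 2) (by positivity)
  obtain ⟨e, he, hle⟩ := hspan s' hs' (ε / 2) (by positivity)
  refine ⟨e, he, ?_⟩
  have h1 : T.lact e s = T.lact e (s - s') + T.lact e s' := by
    rw [← lact_add, sub_add_cancel]
  rw [h1]
  refine (norm_add_le _ _).trans ?_
  have h2 := he.norm_lact_le (s - s')
  rw [dist_eq_norm] at hd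
  linarith

lemma fiberSet_bddBelow (χ : Hom (1 : Obj) 1 → ℂ) {ρ σ : Obj} (t : Hom ρ σ) :
    BddBelow {r : ℝ | ∃ s ∈ tensFiberNull T χ ρ σ, r = ‖t - s‖} :=
  ⟨0, by rintro r ⟨s, -, rfl⟩; exact norm_nonneg _⟩

lemma fiberSet_nonempty (χ : Hom (1 : Obj) 1 → ℂ) {ρ σ : Obj} (t : Hom ρ σ) :
    {r : ℝ | ∃ s ∈ tensFiberNull T χ ρ σ, r = ‖t - s‖}.Nonempty :=
  ⟨_, 0, Submodule.zero_mem _, rfl⟩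

lemma fiber_nonneg (χ : Hom (1 : Obj) 1 → ℂ) {ρ σ : Obj} (t : Hom ρ σ) :
    0 ≤ tensFiberSeminorm T χ t :=
  Real.sInf_nonneg (by rintro r ⟨s, -, rfl⟩; exact norm_nonneg _)

lemma fiber_le_norm (χ : Hom (1 : Obj) 1 → ℂ) {ρ σ : Obj} (t : Hom ρ σ) :
    tensFiberSeminorm T χ t ≤ ‖t‖ :=
  csInf_le (fiberSet_bddBelow χ t) ⟨0, Submodule.zero_mem _, by rw [sub_zero]⟩

lemma fiber_le_lact {χ : Hom (1 : Obj) 1 → ℂ} (h : IsCharacter C T χ) {e : Hom (1 : Obj) 1}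
    (he : e ∈ T.centralScalars) (hχ : χ e = 1) {ρ σ : Obj} (t : Hom ρ σ) :
    tensFiberSeminorm T χ t ≤ ‖T.lact e t‖ := by
  refine csInf_le (fiberSet_bddBelow χ t) ⟨t - T.lact e t, ?_, by rw [sub_sub_cancel]⟩
  refine Submodule.le_topologicalClosure _ (Submodule.subset_span ?_)
  refine ⟨C.id 1 + (-1 : ℂ) • e, central_add T (central_id T) (central_smul T _ he), t, ?_, ?_⟩
  · rw [h.2.1, h.2.2.1, h.2.2.2.2.1, hχ]; norm_num
  · rw [add_lact, smul_lact, id_lact, neg_one_smul, sub_eq_add_neg]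

lemma exists_bump_lt [CompleteSpace (Hom (1 : Obj) 1)] {χ : Hom (1 : Obj) 1 → ℂ}
    (h : IsCharacter C T χ) {ρ σ : Obj} {t : Hom ρ σ} {r : ℝ}
    (hr : tensFiberSeminorm T χ t < r) : ∃ e, IsBump T χ e ∧ ‖T.lact e t‖ < r := by
  obtain ⟨r', ⟨s, hs, rfl⟩, hlt⟩ := exists_lt_of_csInf_lt (fiberSet_nonempty χ t) hr
  obtain ⟨e, he, hle⟩ := exists_lact_le h hs ((r - ‖t - s‖) / 2) (by linarith)
  refine ⟨e, he, ?_⟩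
  have h1 : T.lact e t = T.lact e (t - s) + T.lact e s := by
    rw [← lact_add, sub_add_cancel]
  rw [h1]
  have h2 := he.norm_lact_le (t - s)
  have h3 := norm_add_le (T.lact e (t - s)) (T.lact e s)
  linarith

lemma lact_comp_comp {ρ σ τ : Obj} (e e' : Hom (1 : Obj) 1) (t : Hom σ τ) (u : Hom ρ σ) :
    T.lact (C.comp e e') (C.comp t u) = C.comp (T.lact e t) (T.lact e' u) := by
  rw [comp_lact, lact_comp_right, lact_comp_left]

lemma lact_comp_tens {ρ σ ρ' σ' : Obj} (e : Hom (1 : Obj) 1) {e' : Hom (1 : Obj) 1}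
    (he' : e' ∈ T.centralScalars) (t : Hom ρ σ) (u : Hom ρ' σ') :
    T.lact (C.comp e e') (T.tens t u) = T.tens (T.lact e t) (T.lact e' u) := by
  rw [comp_lact, tens_lact_left, tens_lact_right T he']

lemma le_mul_of_forall_lt_aux {a x y : ℝ} (hx : 0 ≤ x) (hy : 0 ≤ y)
    (H : ∀ ε : ℝ, 0 < ε → a ≤ (x + ε) * (y + ε)) : a ≤ x * y := by
  have hc : Filter.Tendsto (fun ε : ℝ => (x + ε) * (y + ε)) (nhdsWithin 0 (Set.Ioi 0))
      (nhds (x * y)) := by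
    have : Continuous fun ε : ℝ => (x + ε) * (y + ε) := by fun_prop
    have h2 := this.tendsto 0
    simp only [add_zero] at h2
    exact h2.mono_left nhdsWithin_le_nhds
  exact ge_of_tendsto hc (Filter.eventually_of_mem self_mem_nhdsWithin fun ε hε => H ε hε)

lemma fiber_add_le [CompleteSpace (Hom (1 : Obj) 1)] {χ : Hom (1 : Obj) 1 → ℂ}
    (h : IsCharacter C T χ) {ρ σ : Obj} (t u : Hom ρ σ) :
    tensFiberSeminorm T χ (t + u) ≤ tensFiberSeminorm T χ t + tensFiberSeminorm T χ u := by
  refine le_of_forall_pos_le_add fun ε hε => ?_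
  obtain ⟨e, he, hle⟩ := exists_bump_lt h
    (show tensFiberSeminorm T χ t < tensFiberSeminorm T χ t + ε / 2 by linarith)
  obtain ⟨e', he', hle'⟩ := exists_bump_lt h
    (show tensFiberSeminorm T χ u < tensFiberSeminorm T χ u + ε / 2 by linarith)
  have hb := he.comp h he'
  refine (fiber_le_lact h hb.1 hb.2.1 _).trans ?_
  rw [lact_add]
  refine (norm_add_le _ _).trans ?_
  have h1 : ‖T.lact (C.comp e e') t‖ ≤ ‖T.lact e t‖ := by
    rw [scalar_comm T, comp_lact]
    exact he'.norm_lact_le _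
  have h2 : ‖T.lact (C.comp e e') u‖ ≤ ‖T.lact e' u‖ := by
    rw [comp_lact]
    exact he.norm_lact_le _
  linarith

lemma fiber_smul_le [CompleteSpace (Hom (1 : Obj) 1)] {χ : Hom (1 : Obj) 1 → ℂ}
    (h : IsCharacter C T χ) {ρ σ : Obj} (c : ℂ) (t : Hom ρ σ) :
    tensFiberSeminorm T χ (c • t) ≤ ‖c‖ * tensFiberSeminorm T χ t := by
  refine le_mul_of_forall_lt_aux (norm_nonneg c) (fiber_nonneg χ t) fun ε hε => ?_
  obtain ⟨e, he, hle⟩ := exists_bump_lt h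
    (show tensFiberSeminorm T χ t < tensFiberSeminorm T χ t + ε by linarith)
  refine (fiber_le_lact h he.1 he.2.1 _).trans ?_
  rw [lact_smul, norm_smul]
  gcongr
  linarith

lemma fiber_smul [CompleteSpace (Hom (1 : Obj) 1)] {χ : Hom (1 : Obj) 1 → ℂ}
    (h : IsCharacter C T χ) {ρ σ : Obj} (c : ℂ) (t : Hom ρ σ) :
    tensFiberSeminorm T χ (c • t) = ‖c‖ * tensFiberSeminorm T χ t := by
  refine le_antisymm (fiber_smul_le h c t) ?_
  by_cases hc : c = 0
  · rw [hc, norm_zero, zero_mul]; exact fiber_nonneg _ _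
  · have h1 := fiber_smul_le h c⁻¹ (c • t)
    rw [inv_smul_smul₀ hc, norm_inv] at h1
    have hc' : 0 < ‖c‖ := norm_pos_iff.2 hc
    calc ‖c‖ * tensFiberSeminorm T χ t
        ≤ ‖c‖ * (‖c‖⁻¹ * tensFiberSeminorm T χ (c • t)) := by gcongr
      _ = tensFiberSeminorm T χ (c • t) := by field_simp

lemma fiber_comp_le [CompleteSpace (Hom (1 : Obj) 1)] {χ : Hom (1 : Obj) 1 → ℂ}
    (h : IsCharacter C T χ) {ρ σ τ : Obj} (t : Hom σ τ) (u : Hom ρ σ) :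
    tensFiberSeminorm T χ (C.comp t u) ≤ tensFiberSeminorm T χ t * tensFiberSeminorm T χ u := by
  refine le_mul_of_forall_lt_aux (fiber_nonneg χ t) (fiber_nonneg χ u) fun ε hε => ?_
  obtain ⟨e, he, hle⟩ := exists_bump_lt h
    (show tensFiberSeminorm T χ t < tensFiberSeminorm T χ t + ε by linarith)
  obtain ⟨e', he', hle'⟩ := exists_bump_lt h
    (show tensFiberSeminorm T χ u < tensFiberSeminorm T χ u + ε by linarith)
  have hb := he.comp h he'
  refine (fiber_le_lact h hb.1 hb.2.1 _).trans ?_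
  rw [lact_comp_comp]
  refine (C.norm_comp_le _ _).trans ?_
  exact mul_le_mul hle.le hle'.le (norm_nonneg _) ((norm_nonneg _).trans hle.le)

lemma fiber_tens_le [CompleteSpace (Hom (1 : Obj) 1)] {χ : Hom (1 : Obj) 1 → ℂ}
    (h : IsCharacter C T χ) {ρ σ ρ' σ' : Obj} (t : Hom ρ σ) (u : Hom ρ' σ') :
    tensFiberSeminorm T χ (T.tens t u) ≤ tensFiberSeminorm T χ t * tensFiberSeminorm T χ u := by
  refine le_mul_of_forall_lt_aux (fiber_nonneg χ t) (fiber_nonneg χ u) fun ε hε => ?_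
  obtain ⟨e, he, hle⟩ := exists_bump_lt h
    (show tensFiberSeminorm T χ t < tensFiberSeminorm T χ t + ε by linarith)
  obtain ⟨e', he', hle'⟩ := exists_bump_lt h
    (show tensFiberSeminorm T χ u < tensFiberSeminorm T χ u + ε by linarith)
  have hb := he.comp h he'
  refine (fiber_le_lact h hb.1 hb.2.1 _).trans ?_
  rw [lact_comp_tens e he'.1]
  refine (T.norm_tens_le _ _).trans ?_
  exact mul_le_mul hle.le hle'.le (norm_nonneg _) ((norm_nonneg _).trans hle.le)

lemma fiber_star_le [CompleteSpace (Hom (1 : Obj) 1)] {χ : Hom (1 : Obj) 1 → ℂ}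
    (h : IsCharacter C T χ) {ρ σ : Obj} (t : Hom ρ σ) :
    tensFiberSeminorm T χ (C.star t) ≤ tensFiberSeminorm T χ t := by
  refine le_of_forall_pos_le_add fun ε hε => ?_
  obtain ⟨e, he, hle⟩ := exists_bump_lt h
    (show tensFiberSeminorm T χ t < tensFiberSeminorm T χ t + ε by linarith)
  have hb := he.star h
  refine (fiber_le_lact h hb.1 hb.2.1 _).trans ?_
  rw [← lact_star, C.norm_star]
  exact hle.le

lemma fiber_star [CompleteSpace (Hom (1 : Obj) 1)] {χ : Hom (1 : Obj) 1 → ℂ}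
    (h : IsCharacter C T χ) {ρ σ : Obj} (t : Hom ρ σ) :
    tensFiberSeminorm T χ (C.star t) = tensFiberSeminorm T χ t := by
  refine le_antisymm (fiber_star_le h t) ?_
  have := fiber_star_le h (C.star t)
  rwa [C.star_star] at this

lemma fiber_cstar [CompleteSpace (Hom (1 : Obj) 1)] {χ : Hom (1 : Obj) 1 → ℂ}
    (h : IsCharacter C T χ) {ρ σ : Obj} (t : Hom ρ σ) :
    tensFiberSeminorm T χ (C.comp (C.star t) t) = tensFiberSeminorm T χ t ^ 2 := by
  apply le_antisymm
  · have := fiber_comp_le h (C.star t) t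
    rwa [fiber_star h, ← sq] at this
  · refine le_of_forall_pos_le_add fun ε hε => ?_
    obtain ⟨e, he, hle⟩ := exists_bump_lt h
      (show tensFiberSeminorm T χ (C.comp (C.star t) t) <
        tensFiberSeminorm T χ (C.comp (C.star t) t) + ε by linarith)
    refine le_trans ?_ hle.le
    calc tensFiberSeminorm T χ t ^ 2 ≤ ‖T.lact e t‖ ^ 2 :=
          pow_le_pow_left₀ (fiber_nonneg χ t) (fiber_le_lact h he.1 he.2.1 t) 2
      _ = ‖T.lact (C.star e) (T.lact e (C.comp (C.star t) t))‖ := by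
          rw [← C.cstar_identity, lact_star, ← lact_comp_comp, comp_lact]
      _ ≤ ‖T.lact e (C.comp (C.star t) t)‖ := (he.star h).norm_lact_le _

lemma fiber_usc [CompleteSpace (Hom (1 : Obj) 1)] {ρ σ : Obj} (t : Hom ρ σ) :
    UpperSemicontinuous fun χ : {χ : Hom (1 : Obj) 1 → ℂ // IsCharacter C T χ} =>
        tensFiberSeminorm T χ.1 t := by
  intro χ r hr
  obtain ⟨e, he, hle⟩ := exists_bump_lt χ.2 hr
  have hc : Continuous fun χ' : {χ : Hom (1 : Obj) 1 → ℂ // IsCharacter C T χ} => χ'.1 e :=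
    (continuous_apply e).comp continuous_subtype_val
  have hχe : χ.1 e = 1 := he.2.1
  have ht : Filter.Tendsto (fun χ' : {χ : Hom (1 : Obj) 1 → ℂ // IsCharacter C T χ} =>
      ‖(χ'.1 e)⁻¹‖ * ‖T.lact e t‖) (nhds χ) (nhds ‖T.lact e t‖) := by
    have h1 := ((hc.tendsto χ).inv₀ (by rw [hχe]; exact one_ne_zero)).norm.mul_const ‖T.lact e t‖
    simpa [hχe] using h1
  have hne : ∀ᶠ χ' : {χ : Hom (1 : Obj) 1 → ℂ // IsCharacter C T χ} in nhds χ, χ'.1 e ≠ 0 :=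
    (hc.tendsto χ).eventually_ne (by rw [hχe]; exact one_ne_zero)
  filter_upwards [ht.eventually_lt_const hle, hne] with χ' h1 h2
  refine lt_of_le_of_lt ?_ h1
  have := fiber_le_lact χ'.2 (central_smul T (χ'.1 e)⁻¹ he.1)
    (by rw [χ'.2.2.2.1, inv_mul_cancel₀ h2]) t
  rwa [smul_lact, norm_smul] at this

lemma exists_isCharacter [CompleteSpace (Hom (1 : Obj) 1)] (φ : centralAlg T →⋆ₐ[ℂ] ℂ) :
    ∃ χ : Hom (1 : Obj) 1 → ℂ, IsCharacter C T χ ∧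
      ∀ f (hf : f ∈ T.centralScalars), χ f = φ ⟨f, hf⟩ := by
  have hc : Continuous φ := map_continuous φ
  let L : StrongDual ℂ (Subalgebra.toSubmodule (centralAlg T).toSubalgebra) :=
    { toFun := fun x => φ x
      map_add' := fun x y => map_add φ x y
      map_smul' := fun c x => map_smul φ c x
      cont := hc }
  obtain ⟨g, hg, -⟩ := exists_extension_norm_eq _ L
  have hg' : ∀ f (hf : f ∈ T.centralScalars), g f = φ ⟨f, hf⟩ := fun f hf => hg ⟨f, hf⟩
  refine ⟨fun f => g f, ⟨g.continuous, fun f k => map_add g f k, fun c f => map_smul g c f,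
    fun f hf k hk => ?_, ?_, fun f hf => ?_⟩, hg'⟩
  · change g _ = g _ * g _
    rw [hg' _ hf, hg' _ hk, hg' _ (central_comp T hf hk)]
    exact map_mul φ ⟨f, hf⟩ ⟨k, hk⟩
  · change g _ = 1
    rw [hg' _ (central_id T)]
    exact map_one φ
  · change g _ = starRingEnd ℂ (g _)
    rw [hg' _ hf, hg' _ (central_star T hf)]
    exact map_star φ ⟨f, hf⟩

lemma exists_norming [∀ ρ σ : Obj, CompleteSpace (Hom ρ σ)] {ρ σ : Obj} (t : Hom ρ σ)
    (ht : t ≠ 0) : ∃ χ : Hom (1 : Obj) 1 → ℂ, IsCharacter C T χ ∧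
      ‖t‖ ≤ tensFiberSeminorm T χ t := by
  let a : EndAlg C ρ := (C.comp (C.star t) t : Hom ρ ρ)
  have hna : ‖a‖ = ‖t‖ ^ 2 := C.cstar_identity t
  have ha0 : a ≠ 0 := by
    rw [← norm_ne_zero_iff, hna]
    exact pow_ne_zero 2 (norm_ne_zero_iff.2 ht)
  have : Nontrivial (EndAlg C ρ) := ⟨a, 0, ha0⟩
  have hsa : IsSelfAdjoint a := by
    have h1 : C.star (C.comp (C.star t) t) = C.comp (C.star t) t := by
      rw [C.star_comp, C.star_star]
    exact h1
  have hcl : ∀ f : Hom (1 : Obj) 1, C.comp (T.lact f (C.id ρ)) (C.comp (C.star t) t) =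
      T.lact f (C.comp (C.star t) t) := fun f => by
    rw [← lact_comp_left, C.id_comp]
  have hcr : ∀ f : Hom (1 : Obj) 1, C.comp (C.comp (C.star t) t) (T.lact f (C.id ρ)) =
      T.lact f (C.comp (C.star t) t) := fun f => by
    rw [← lact_comp_right, C.comp_id]
  obtain ⟨φ, hφ⟩ := exists_norming_character (centralHom T ρ) a hsa
    (fun f => (hcl f.1).trans (hcr f.1).symm)
  obtain ⟨χ, h, hχ⟩ := exists_isCharacter φ
  refine ⟨χ, h, ?_⟩
  refine le_of_forall_pos_le_add fun ε hε => ?_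
  have key : ‖t‖ ^ 2 ≤ tensFiberSeminorm T χ t ^ 2 := by
    rw [← fiber_cstar h]
    refine le_of_forall_pos_le_add fun ε hε => ?_
    obtain ⟨e, he, hle⟩ := exists_bump_lt h
      (show tensFiberSeminorm T χ (C.comp (C.star t) t) <
        tensFiberSeminorm T χ (C.comp (C.star t) t) + ε by linarith)
    have h1 := hφ ⟨e, he.1⟩ ((hχ e he.1).symm.trans he.2.1)
    rw [hna] at h1
    refine h1.trans (le_trans (le_of_eq ?_) hle.le)
    exact congrArg norm (hcl e)
  have := abs_le_of_sq_le_sq' key (fiber_nonneg χ t) |>.2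
  linarith

end Helpers

/-- Every strict tensor C*-category is an upper semicontinuous field of strict tensor
C*-categories over the spectrum of `[ι,ι]`. -/
theorem strict_tensor_cstar_category_usc_field_over_spectrum
    [∀ ρ σ : Obj, CompleteSpace (Hom ρ σ)]
    (C : CStarCategoryStruct Hom) (T : StrictTensorStruct C) :
    -- upper semicontinuity of the norm functions on the spectrum
    (∀ (ρ σ : Obj) (t : Hom ρ σ),
      UpperSemicontinuous fun χ : {χ : Hom 1 1 → ℂ // IsCharacter C T χ} =>
        tensFiberSeminorm T χ.1 t) ∧
    -- `‖t‖ = sup_x ‖x_*(t)‖`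
    (∀ (ρ σ : Obj) (t : Hom ρ σ),
      ‖t‖ = ⨆ χ : {χ : Hom 1 1 → ℂ // IsCharacter C T χ}, tensFiberSeminorm T χ.1 t) ∧
    -- each `x_*` is a C*-functor into a C*-category (the quotient seminorms are
    -- subadditive, homogeneous, submultiplicative, `*`-isometric, and satisfy the
    -- C*-identity) ...
    (∀ (χ : Hom 1 1 → ℂ), IsCharacter C T χ →
      (∀ (ρ σ : Obj) (t t' : Hom ρ σ),
        tensFiberSeminorm T χ (t + t') ≤
          tensFiberSeminorm T χ t + tensFiberSeminorm T χ t') ∧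
      (∀ (ρ σ : Obj) (c : ℂ) (t : Hom ρ σ),
        tensFiberSeminorm T χ (c • t) = ‖c‖ * tensFiberSeminorm T χ t) ∧
      (∀ (ρ σ τ : Obj) (t : Hom σ τ) (u : Hom ρ σ),
        tensFiberSeminorm T χ (C.comp t u) ≤
          tensFiberSeminorm T χ t * tensFiberSeminorm T χ u) ∧
      (∀ (ρ σ : Obj) (t : Hom ρ σ),
        tensFiberSeminorm T χ (C.star t) = tensFiberSeminorm T χ t) ∧
      (∀ (ρ σ : Obj) (t : Hom ρ σ),
        tensFiberSeminorm T χ (C.comp (C.star t) t) = tensFiberSeminorm T χ t ^ 2) ∧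
      -- ... and each fiber inherits the strict tensor structure (the tensor product
      -- descends to the fibers):
      (∀ (ρ σ ρ' σ' : Obj) (t : Hom ρ σ) (u : Hom ρ' σ'),
        tensFiberSeminorm T χ (T.tens t u) ≤
          tensFiberSeminorm T χ t * tensFiberSeminorm T χ u)) := by
  refine ⟨fun ρ σ t => fiber_usc t, fun ρ σ t => ?_, fun χ h => ⟨?_, ?_, ?_, ?_, ?_, ?_⟩⟩
  · apply le_antisymm
    · by_cases ht : t = 0
      · rw [ht, norm_zero]
        exact Real.iSup_nonneg fun χ => fiber_nonneg _ _
      · obtain ⟨χ, h, hle⟩ := exists_norming (T := T) t ht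
        refine hle.trans (le_ciSup (f := fun χ : {χ : Hom 1 1 → ℂ // IsCharacter C T χ} =>
          tensFiberSeminorm T χ.1 t) ?_ ⟨χ, h⟩)
        exact ⟨‖t‖, by rintro _ ⟨χ', rfl⟩; exact fiber_le_norm _ _⟩
    · exact Real.iSup_le (fun χ => fiber_le_norm _ _) (norm_nonneg t)
  · exact fun ρ σ t t' => fiber_add_le h t t'
  · exact fun ρ σ c t => fiber_smul h c t
  · exact fun ρ σ τ t u => fiber_comp_le h t u
  · exact fun ρ σ t => fiber_star h t
  · exact fun ρ σ t => fiber_cstar h t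
  · exact fun ρ σ ρ' σ' t u => fiber_tens_le h t u
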